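/- The triples of statistics (\underline{31}2, 2\underline{13}, 2\underline{31}) and (\underline{31}2, 2\underline{31}, 2\underline{13}) are equidistributed on the set of Baxter permutations of [n]: ∑_{π Baxter} q^{31̲2(π)} r^{213̲(π)} s^{231̲(π)} = ∑_{π Baxter} q^{31̲2(π)} r^{231̲(π)} s^{213̲(π)}. -/

import Mathlib

namespace Paper

variable {n : ℕ}

/-- The 1-based position corresponding to `i : Fin n`. -/
def pv (i : Fin n) : ℕ := (i : ℕ) + 1

/-- The 1-based letter of the word `f` at 1-based position `k` (0 if out of range). -/
def valAt (f : Fin n → Fin n) (k : ℕ) : ℕ :=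
  if h : 1 ≤ k ∧ k ≤ n then ((f ⟨k - 1, by omega⟩ : Fin n) : ℕ) + 1 else 0

/-- The map θ̂ : the 1-based `i`-th letter of `hatTheta f` is `σ̂_{n+1-i}`,
where `σ̂ₐ = n - a` (1-based) if `a < n` and `n̂ = n`. (0-based encoding.) -/
def hatTheta (f : Fin n → Fin n) (i : Fin n) : Fin n :=
  if ((f i.rev : ℕ)) = n - 1 then f i.rev
  else ⟨n - 2 - (f i.rev : ℕ), by have := i.isLt; omega⟩

end Paper

namespace Paper

variable {n : ℕ}

/-- 2\underline{13}(σ) = #{(ℓ,j) : σ⁻¹(ℓ) < j < n, σⱼ < ℓ < σ_{j+1}} (1-based). -/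
def stat2_13 (σ : Equiv.Perm (Fin n)) : ℕ :=
  (Finset.univ.filter (fun p : Fin n × Fin n =>
    pv (σ.symm p.1) < pv p.2 ∧ pv p.2 < n ∧
    valAt ⇑σ (pv p.2) < pv p.1 ∧ pv p.1 < valAt ⇑σ (pv p.2 + 1))).card

/-- 2\underline{31}(σ) = #{(ℓ,j) : σ⁻¹(ℓ) < j < n, σ_{j+1} < ℓ < σⱼ} (1-based). -/
def stat2_31 (σ : Equiv.Perm (Fin n)) : ℕ :=
  (Finset.univ.filter (fun p : Fin n × Fin n =>
    pv (σ.symm p.1) < pv p.2 ∧ pv p.2 < n ∧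
    valAt ⇑σ (pv p.2 + 1) < pv p.1 ∧ pv p.1 < valAt ⇑σ (pv p.2))).card

/-- \underline{31}2(σ) = #{(ℓ,j) : 1 < j < σ⁻¹(ℓ), σⱼ < ℓ < σ_{j-1}} (1-based). -/
def stat31_2 (σ : Equiv.Perm (Fin n)) : ℕ :=
  (Finset.univ.filter (fun p : Fin n × Fin n =>
    1 < pv p.2 ∧ pv p.2 < pv (σ.symm p.1) ∧
    valAt ⇑σ (pv p.2) < pv p.1 ∧ pv p.1 < valAt ⇑σ (pv p.2 - 1))).card

/-- \underline{13}2(σ) = #{(ℓ,j) : 1 < j < σ⁻¹(ℓ), σ_{j-1} < ℓ < σⱼ} (1-based). -/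
def stat13_2 (σ : Equiv.Perm (Fin n)) : ℕ :=
  (Finset.univ.filter (fun p : Fin n × Fin n =>
    1 < pv p.2 ∧ pv p.2 < pv (σ.symm p.1) ∧
    valAt ⇑σ (pv p.2 - 1) < pv p.1 ∧ pv p.1 < valAt ⇑σ (pv p.2))).card

end Paper

namespace Paper

variable {n : ℕ}

/-- `f` contains the vincular pattern 3\underline{14}2:
∃ i < j, j+1 < ℓ with σⱼ < σ_ℓ < σᵢ < σ_{j+1} (1-based). -/
def Contains3142 (f : Fin n → Fin n) : Prop :=
  ∃ i j l : Fin n, pv i < pv j ∧ pv j + 1 < pv l ∧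
    valAt f (pv j) < valAt f (pv l) ∧ valAt f (pv l) < valAt f (pv i) ∧
    valAt f (pv i) < valAt f (pv j + 1)

/-- `f` contains the vincular pattern 2\underline{41}3:
∃ i < j, j+1 < ℓ with σ_{j+1} < σᵢ < σ_ℓ < σⱼ (1-based). -/
def Contains2413 (f : Fin n → Fin n) : Prop :=
  ∃ i j l : Fin n, pv i < pv j ∧ pv j + 1 < pv l ∧
    valAt f (pv j + 1) < valAt f (pv i) ∧ valAt f (pv i) < valAt f (pv l) ∧
    valAt f (pv l) < valAt f (pv j)

/-- `f` contains \overline{2}41\overline{3}: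
∃ i < j < k < ℓ with σₖ < σᵢ < σ_ℓ = σᵢ + 1 < σⱼ. -/
def Contains2b41_3b (f : Fin n → Fin n) : Prop :=
  ∃ i j k l : Fin n, pv i < pv j ∧ pv j < pv k ∧ pv k < pv l ∧
    valAt f (pv k) < valAt f (pv i) ∧ valAt f (pv l) = valAt f (pv i) + 1 ∧
    valAt f (pv i) + 1 < valAt f (pv j)

/-- `f` contains \overline{3}14\overline{2}:
∃ i < j < k < ℓ with σⱼ < σ_ℓ < σᵢ = σ_ℓ + 1 < σₖ. -/
def Contains3b14_2b (f : Fin n → Fin n) : Prop :=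
  ∃ i j k l : Fin n, pv i < pv j ∧ pv j < pv k ∧ pv k < pv l ∧
    valAt f (pv j) < valAt f (pv l) ∧ valAt f (pv i) = valAt f (pv l) + 1 ∧
    valAt f (pv l) + 1 < valAt f (pv k)

/-- A Baxter permutation avoids both 3\underline{14}2 and 2\underline{41}3. -/
def IsBaxter (f : Fin n → Fin n) : Prop :=
  ¬ Contains3142 f ∧ ¬ Contains2413 f

end Paper

namespace Paper

instance (n : ℕ) : DecidablePred (fun σ : Equiv.Perm (Fin n) => IsBaxter ⇑σ) :=
  fun σ => by unfold IsBaxter Contains3142 Contains2413; infer_instance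


/-- Block index of letter `i` at level `k` (coalescent walk). -/
def XX (a w l s : ℕ → ℕ) : ℕ → ℕ → ℕ
  | 0 => fun _ => 0
  | k + 1 => fun i => if i = k + 1 then a (k + 1)
      else if XX a w l s k i < a k + 1 - w k then XX a w l s k i
      else XX a w l s k i + (1 - s (k + 1)) - l (k + 1)

/-- Letter `i` precedes letter `j`. -/
def Bef (a w l s : ℕ → ℕ) (i j : ℕ) : Prop :=
  (i < j ∧ XX a w l s (j - 1) i < a (j - 1) + 1 - w (j - 1)) ∨
  (j < i ∧ a (i - 1) + 1 - w (i - 1) ≤ XX a w l s (i - 1) j)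

structure Dat (n : ℕ) (a b w l s : ℕ → ℕ) : Prop where
  w1 : ∀ k, w k ≤ 1
  l1 : ∀ k, l k ≤ 1
  s1 : ∀ k, s k ≤ 1
  a0 : a 0 = 0
  b0 : b 0 = 0
  ra : ∀ k, k + 1 < n → a (k + 1) + l (k + 1) = a k + 1 - w k
  rb : ∀ k, k + 1 < n → b (k + 1) + s (k + 1) = b k + w k
  an : a (n - 1) = 0
  bn : b (n - 1) = 0

section
variable {n : ℕ} {a b w l s : ℕ → ℕ}

theorem XX_self (h : Dat n a b w l s) (k : ℕ) : XX a w l s k k = a k := by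
  cases k with
  | zero => simp [XX, h.a0]
  | succ k => simp [XX]

theorem XX_lt {k i : ℕ} (hi : i ≤ k) (hx : XX a w l s k i < a k + 1 - w k) :
    XX a w l s (k + 1) i = XX a w l s k i := by
  have : i ≠ k + 1 := by omega
  simp [XX, this, hx]

theorem XX_ge {k i : ℕ} (hi : i ≤ k) (hx : a k + 1 - w k ≤ XX a w l s k i) :
    XX a w l s (k + 1) i = XX a w l s k i + (1 - s (k + 1)) - l (k + 1) := by
  have : i ≠ k + 1 := by omega
  have h2 : ¬ XX a w l s k i < a k + 1 - w k := by omega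
  simp [XX, this, h2]

theorem Bef_lt {i k : ℕ} (hi : i ≤ k) :
    Bef a w l s i (k + 1) ↔ XX a w l s k i < a k + 1 - w k := by
  unfold Bef
  have h1 : i < k + 1 := by omega
  have h2 : ¬ (k + 1 < i) := by omega
  simp [h1, h2]

theorem Bef_gt {i k : ℕ} (hi : i ≤ k) :
    Bef a w l s (k + 1) i ↔ a k + 1 - w k ≤ XX a w l s k i := by
  unfold Bef
  have h1 : i < k + 1 := by omega
  have h2 : ¬ (k + 1 < i) := by omega
  simp [h1, h2]

theorem Bef_irrefl (i : ℕ) : ¬ Bef a w l s i i := by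
  unfold Bef; omega

theorem Bef_asymm {i j : ℕ} : Bef a w l s i j → ¬ Bef a w l s j i := by
  unfold Bef; rintro (h | h) (h' | h') <;> omega

theorem Bef_total {i j : ℕ} (h : i ≠ j) : Bef a w l s i j ∨ Bef a w l s j i := by
  unfold Bef
  rcases lt_or_gt_of_ne h with h | h
  · by_cases hx : XX a w l s (j - 1) i < a (j - 1) + 1 - w (j - 1)
    · exact Or.inl (Or.inl ⟨h, hx⟩)
    · exact Or.inr (Or.inr ⟨h, by omega⟩)
  · by_cases hx : XX a w l s (i - 1) j < a (i - 1) + 1 - w (i - 1)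
    · exact Or.inr (Or.inl ⟨h, hx⟩)
    · exact Or.inl (Or.inr ⟨h, by omega⟩)

theorem XX_mono (h : Dat n a b w l s) (k : ℕ) (hk : k < n) :
    ∀ i j, i ≤ k → j ≤ k → Bef a w l s i j → XX a w l s k i ≤ XX a w l s k j := by
  induction k with
  | zero => intro i j hi hj _; simp [XX]
  | succ k ih =>
    intro i j hi hj hb
    have ra := h.ra k hk
    have hs := h.s1 (k + 1)
    have hl := h.l1 (k + 1)
    have hself := XX_self h (k + 1)
    rcases Nat.lt_or_ge i (k + 1) with hi' | hi'
    · rcases Nat.lt_or_ge j (k + 1) with hj' | hj'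
      · have := ih (by omega) i j (by omega) (by omega) hb
        rcases Nat.lt_or_ge (XX a w l s k i) (a k + 1 - w k) with c1 | c1 <;>
        rcases Nat.lt_or_ge (XX a w l s k j) (a k + 1 - w k) with c2 | c2
        · rw [XX_lt (by omega) c1, XX_lt (by omega) c2]; omega
        · rw [XX_lt (by omega) c1, XX_ge (by omega) c2]; omega
        · omega
        · rw [XX_ge (by omega) c1, XX_ge (by omega) c2]; omega
      · obtain rfl : j = k + 1 := by omega
        have c1 := (Bef_lt (by omega)).1 hb
        rw [XX_lt (by omega) c1]; omega
    · obtain rfl : i = k + 1 := by omega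
      rcases Nat.lt_or_ge j (k + 1) with hj' | hj'
      · have c1 := (Bef_gt (by omega)).1 hb
        rw [XX_ge (by omega) c1]; omega
      · obtain rfl : j = k + 1 := by omega
        omega

theorem Bef_trans (h : Dat n a b w l s) (k : ℕ) (hk : k < n) :
    ∀ i j m, i ≤ k → j ≤ k → m ≤ k → Bef a w l s i j → Bef a w l s j m → Bef a w l s i m := by
  induction k with
  | zero =>
    intro i j m hi hj hm hb
    obtain rfl : i = 0 := by omega
    obtain rfl : j = 0 := by omega
    exact absurd hb (Bef_irrefl _)
  | succ k ih =>
    intro i j m hi hj hm h1 h2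
    have mono := XX_mono h k (by omega)
    rcases Nat.lt_or_ge i (k + 1) with hi' | hi'
    · rcases Nat.lt_or_ge j (k + 1) with hj' | hj'
      · rcases Nat.lt_or_ge m (k + 1) with hm' | hm'
        · exact ih (by omega) i j m (by omega) (by omega) (by omega) h1 h2
        · obtain rfl : m = k + 1 := by omega
          rw [Bef_lt (by omega)] at h2 ⊢
          have := mono i j (by omega) (by omega) h1
          omega
      · obtain rfl : j = k + 1 := by omega
        rcases Nat.lt_or_ge m (k + 1) with hm' | hm'
        · rw [Bef_lt (by omega)] at h1
          rw [Bef_gt (by omega)] at h2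
          have hne : i ≠ m := by rintro rfl; omega
          rcases Bef_total (a := a) (w := w) (l := l) (s := s) hne with hb | hb
          · exact hb
          · have := mono m i (by omega) (by omega) hb
            omega
        · obtain rfl : m = k + 1 := by omega
          exact absurd h2 (Bef_irrefl _)
    · obtain rfl : i = k + 1 := by omega
      rcases Nat.lt_or_ge j (k + 1) with hj' | hj'
      · rcases Nat.lt_or_ge m (k + 1) with hm' | hm'
        · rw [Bef_gt (by omega)] at h1 ⊢
          have := mono j m (by omega) (by omega) h2
          omega
        · obtain rfl : m = k + 1 := by omega
          exact absurd h1 (Bef_asymm h2)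
      · obtain rfl : j = k + 1 := by omega
        exact absurd h1 (Bef_irrefl _)

theorem XX_le (h : Dat n a b w l s) (k : ℕ) (hk : k < n) :
    ∀ i, i ≤ k → XX a w l s k i ≤ a k + b k := by
  induction k with
  | zero => intro i hi; simp [XX]
  | succ k ih =>
    intro i hi
    have ra := h.ra k hk
    have rb := h.rb k hk
    have hs := h.s1 (k + 1)
    have hl := h.l1 (k + 1)
    have hw := h.w1 k
    have hself := XX_self h (k + 1)
    rcases Nat.lt_or_ge i (k + 1) with hi' | hi'
    · have := ih (by omega) i (by omega)
      rcases Nat.lt_or_ge (XX a w l s k i) (a k + 1 - w k) with c1 | c1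
      · rw [XX_lt (by omega) c1]; omega
      · rw [XX_ge (by omega) c1]; omega
    · obtain rfl : i = k + 1 := by omega
      omega

theorem XX_cover (h : Dat n a b w l s) (k : ℕ) (hk : k < n) :
    ∀ c, c ≤ a k + b k → ∃ i, i ≤ k ∧ XX a w l s k i = c := by
  induction k with
  | zero =>
    intro c hc
    have := h.a0
    have := h.b0
    exact ⟨0, le_refl _, by simp [XX]; omega⟩
  | succ k ih =>
    intro c hc
    have ra := h.ra k hk
    have rb := h.rb k hk
    have hs := h.s1 (k + 1)
    have hl := h.l1 (k + 1)
    have hw := h.w1 k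
    have hself := XX_self h (k + 1)
    by_cases hca : c = a (k + 1)
    · exact ⟨k + 1, le_refl _, by omega⟩
    · rcases Nat.lt_or_ge c (a k + 1 - w k) with c1 | c1
      · obtain ⟨i, hi, hx⟩ := ih (by omega) c (by omega)
        exact ⟨i, by omega, by rw [XX_lt hi (by omega)]; omega⟩
      · obtain ⟨i, hi, hx⟩ := ih (by omega) (c + l (k + 1) + s (k + 1) - 1) (by omega)
        exact ⟨i, by omega, by rw [XX_ge hi (by omega)]; omega⟩

theorem XX_eq_persist {m i j : ℕ} (hi : i ≤ m) (hj : j ≤ m)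
    (he : XX a w l s m i = XX a w l s m j) (m' : ℕ) (hm : m ≤ m') :
    XX a w l s m' i = XX a w l s m' j := by
  induction m', hm using Nat.le_induction with
  | base => exact he
  | succ k hk ih =>
    rcases Nat.lt_or_ge (XX a w l s k i) (a k + 1 - w k) with c1 | c1
    · rw [XX_lt (by omega) c1, XX_lt (by omega) (by omega)]; exact ih
    · rw [XX_ge (by omega) c1, XX_ge (by omega) (by omega), ih]

theorem no_between {m i j : ℕ} (hi : i ≤ m) (hj : j ≤ m)
    (he : XX a w l s m i = XX a w l s m j) {p : ℕ} (hp : m < p)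
    (h1 : Bef a w l s i p) (h2 : Bef a w l s p j) : False := by
  obtain ⟨q, rfl⟩ : ∃ q, p = q + 1 := ⟨p - 1, by omega⟩
  have := XX_eq_persist hi hj he q (by omega)
  rw [Bef_lt (by omega)] at h1
  rw [Bef_gt (by omega)] at h2
  omega

theorem ex_between (h : Dat n a b w l s) {m i j : ℕ} (hi : i ≤ m) (hj : j ≤ m)
    (he : XX a w l s m i < XX a w l s m j) (hm : m < n) :
    ∃ p, m < p ∧ p < n ∧ Bef a w l s i p ∧ Bef a w l s p j := by
  by_contra hno
  push Not at hno
  have key : ∀ m', m ≤ m' → m' < n → XX a w l s m' i < XX a w l s m' j := by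
    intro m' hm'
    induction m', hm' using Nat.le_induction with
    | base => intro _; exact he
    | succ k hk ih =>
      intro hkn
      have ih := ih (by omega)
      have ra := h.ra k hkn
      have hl := h.l1 (k + 1)
      rcases Nat.lt_or_ge (XX a w l s k i) (a k + 1 - w k) with c1 | c1 <;>
      rcases Nat.lt_or_ge (XX a w l s k j) (a k + 1 - w k) with c2 | c2
      · rw [XX_lt (by omega) c1, XX_lt (by omega) c2]; omega
      · exact absurd ((Bef_gt (by omega)).2 c2)
          (hno (k + 1) (by omega) hkn ((Bef_lt (by omega)).2 c1))
      · omega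
      · rw [XX_ge (by omega) c1, XX_ge (by omega) c2]; omega
  have h1 := key (n - 1) (by omega) (by omega)
  have h2 := XX_le h (n - 1) (by omega) j (by omega)
  have := h.an
  have := h.bn
  omega

theorem Bef_tr (h : Dat n a b w l s) {i j m : ℕ} (hi : i < n) (hj : j < n) (hm : m < n)
    (h1 : Bef a w l s i j) (h2 : Bef a w l s j m) : Bef a w l s i m :=
  Bef_trans h (n - 1) (by omega) i j m (by omega) (by omega) (by omega) h1 h2

/-- order-theoretic data -/
theorem Bef_w (h : Dat n a b w l s) (k : ℕ) : Bef a w l s (k + 1) k ↔ w k = 1 := by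
  rw [Bef_gt (le_refl _), XX_self h]
  have := h.w1 k
  omega

/-- `p` precedes `k` immediately -/
theorem dat_l (h : Dat n a b w l s) {p k : ℕ} (hk : k < n) (hp : p < n)
    (hb : Bef a w l s p k) (hadj : ∀ q, q < n → Bef a w l s p q → ¬ Bef a w l s q k)
    (hpk : p < k) : l k = 1 := by
  by_contra hl
  have hl1 := h.l1 k
  obtain ⟨k, rfl⟩ : ∃ q, k = q + 1 := ⟨k - 1, by omega⟩
  have hx := (Bef_lt (by omega)).1 hb
  have ra := h.ra k hk
  have hself := XX_self h (k + 1)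
  have : XX a w l s (k + 1) p < XX a w l s (k + 1) (k + 1) := by
    rw [XX_lt (by omega) hx]; omega
  obtain ⟨q, _, hq, h1, h2⟩ := ex_between h (by omega) (le_refl _) this hk
  exact hadj q hq h1 h2

theorem dat_l' (h : Dat n a b w l s) {k : ℕ} (hk : k < n) (hk0 : 0 < k) (hl : l k = 1) :
    ∃ i, i < k ∧ Bef a w l s i k ∧ ∀ q, k < q → Bef a w l s i q → ¬ Bef a w l s q k := by
  obtain ⟨k, rfl⟩ : ∃ q, k = q + 1 := ⟨k - 1, by omega⟩
  have ra := h.ra k hk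
  have hw := h.w1 k
  have hself := XX_self h (k + 1)
  obtain ⟨i, hi, hx⟩ := XX_cover h k (by omega) (a k - w k) (by omega)
  have hlt : XX a w l s k i < a k + 1 - w k := by omega
  have he : XX a w l s (k + 1) i = XX a w l s (k + 1) (k + 1) := by
    rw [XX_lt hi hlt]; omega
  exact ⟨i, by omega, (Bef_lt hi).2 hlt, fun q hq h1 h2 =>
    no_between (by omega) (le_refl _) he hq h1 h2⟩

theorem dat_s (h : Dat n a b w l s) {p k : ℕ} (hk : k < n) (hp : p < n)
    (hb : Bef a w l s k p) (hadj : ∀ q, q < n → Bef a w l s k q → ¬ Bef a w l s q p)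
    (hpk : p < k) : s k = 1 := by
  by_contra hl
  have hl1 := h.s1 k
  obtain ⟨k, rfl⟩ : ∃ q, k = q + 1 := ⟨k - 1, by omega⟩
  have hx := (Bef_gt (by omega)).1 hb
  have ra := h.ra k hk
  have hself := XX_self h (k + 1)
  have : XX a w l s (k + 1) (k + 1) < XX a w l s (k + 1) p := by
    rw [XX_ge (by omega) hx]; omega
  obtain ⟨q, _, hq, h1, h2⟩ := ex_between h (le_refl _) (by omega) this hk
  exact hadj q hq h1 h2

theorem dat_s' (h : Dat n a b w l s) {k : ℕ} (hk : k < n) (hk0 : 0 < k) (hl : s k = 1) :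
    ∃ i, i < k ∧ Bef a w l s k i ∧ ∀ q, k < q → Bef a w l s k q → ¬ Bef a w l s q i := by
  obtain ⟨k, rfl⟩ : ∃ q, k = q + 1 := ⟨k - 1, by omega⟩
  have ra := h.ra k hk
  have rb := h.rb k hk
  have hw := h.w1 k
  have hself := XX_self h (k + 1)
  obtain ⟨i, hi, hx⟩ := XX_cover h k (by omega) (a k + 1 - w k) (by omega)
  have hge : a k + 1 - w k ≤ XX a w l s k i := by omega
  have he : XX a w l s (k + 1) (k + 1) = XX a w l s (k + 1) i := by
    rw [XX_ge hi hge]; omega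
  exact ⟨i, by omega, (Bef_gt hi).2 hge, fun q hq h1 h2 =>
    no_between (le_refl _) (by omega) he hq h1 h2⟩

/-- barred Baxter conditions -/
theorem bar1 (h : Dat n a b w l s) {k x y : ℕ} (hk : k + 1 < n) (hx : x < k) (hy : k + 1 < y)
    (hyn : y < n) (h1 : Bef a w l s k y) (h2 : Bef a w l s y x) (h3 : Bef a w l s x (k + 1)) :
    False := by
  have hkx := Bef_tr h (by omega) hyn (by omega) h1 h2
  have hm := XX_mono h k (by omega) k x (le_refl _) (by omega) hkx
  rw [Bef_lt (by omega)] at h3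
  have hself := XX_self h k
  exact no_between (m := k) (le_refl _) (by omega) (by omega) (by omega) h1 h2

theorem bar2 (h : Dat n a b w l s) {k x y : ℕ} (hk : k + 1 < n) (hx : x < k) (hy : k + 1 < y)
    (hyn : y < n) (h1 : Bef a w l s (k + 1) x) (h2 : Bef a w l s x y) (h3 : Bef a w l s y k) :
    False := by
  have hkx := Bef_tr h (by omega) hyn (by omega) h2 h3
  have hm := XX_mono h k (by omega) x k (by omega) (le_refl _) hkx
  rw [Bef_gt (by omega)] at h1
  have hself := XX_self h k
  have hw := h.w1 k
  have hk2 : Bef a w l s (k + 1) k :=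
    Bef_tr h (by omega) (by omega) (by omega) ((Bef_gt (by omega)).2 h1) hkx
  rw [Bef_w h] at hk2
  exact no_between (m := k) (by omega) (le_refl _) (by omega) (by omega) h2 h3
end

structure IsP (n : ℕ) (V P : ℕ → ℕ) : Prop where
  vlt : ∀ p, p < n → V p < n
  plt : ∀ k, k < n → P k < n
  pv : ∀ p, p < n → P (V p) = p
  vp : ∀ k, k < n → V (P k) = k

def Bax (n : ℕ) (V : ℕ → ℕ) : Prop :=
  (∀ i j l, i < j → j + 1 < l → l < n → V j < V l → V l < V i → V i < V (j + 1) → False) ∧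
  (∀ i j l, i < j → j + 1 < l → l < n → V (j + 1) < V i → V i < V l → V l < V j → False)

def uf (P : ℕ → ℕ) (k : ℕ) : ℕ := if P k < P (k + 1) then 0 else 1
def lf (V P : ℕ → ℕ) (k : ℕ) : ℕ := if 0 < P k ∧ V (P k - 1) < k then 1 else 0
def gf (V P : ℕ → ℕ) (k : ℕ) : ℕ := if 0 < P k ∧ k < V (P k - 1) then 1 else 0
def sf (n : ℕ) (V P : ℕ → ℕ) (k : ℕ) : ℕ := if P k + 1 < n ∧ V (P k + 1) < k then 1 else 0

def asc (V : ℕ → ℕ) (c Q : ℕ) : ℕ :=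
  ∑ j ∈ Finset.range Q, if V j ≤ c ∧ c < V (j + 1) then 1 else 0
def dsc (V : ℕ → ℕ) (c Q : ℕ) : ℕ :=
  ∑ j ∈ Finset.range Q, if c < V j ∧ V (j + 1) ≤ c then 1 else 0

def Af (V P : ℕ → ℕ) (k : ℕ) : ℕ := asc V k (P k)
def Ef (V P : ℕ → ℕ) (k : ℕ) : ℕ :=
  ∑ j ∈ Finset.range (P k), if k < V j ∧ V (j + 1) < k then 1 else 0

theorem asc_succ (V : ℕ → ℕ) (c Q : ℕ) :
    asc V c (Q + 1) = asc V c Q + if V Q ≤ c ∧ c < V (Q + 1) then 1 else 0 := by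
  unfold asc; rw [Finset.sum_range_succ]

theorem dsc_succ (V : ℕ → ℕ) (c Q : ℕ) :
    dsc V c (Q + 1) = dsc V c Q + if c < V Q ∧ V (Q + 1) ≤ c then 1 else 0 := by
  unfold dsc; rw [Finset.sum_range_succ]

theorem asc_zero (V : ℕ → ℕ) (c : ℕ) : asc V c 0 = 0 := by simp [asc]

section
variable {n : ℕ} {V P : ℕ → ℕ}

theorem IsP.inj (h : IsP n V P) {i j : ℕ} (hi : i < n) (hj : j < n) (e : P i = P j) : i = j := by
  rw [← h.vp i hi, e, h.vp j hj]

theorem IsP.v_eq (h : IsP n V P) {p k : ℕ} (hp : p < n) (hk : k < n) : V p = k ↔ p = P k := by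
  constructor
  · rintro rfl; exact (h.pv p hp).symm
  · rintro rfl; exact h.vp k hk

theorem asc_dsc (V : ℕ → ℕ) (c Q : ℕ) :
    asc V c Q + (if c < V 0 then 1 else 0) = dsc V c Q + (if c < V Q then 1 else 0) := by
  induction Q with
  | zero => simp [asc, dsc]
  | succ Q ih =>
    rw [asc_succ, dsc_succ]
    split_ifs at ih ⊢ <;> omega

theorem dsc_E (h : IsP n V P) {k : ℕ} (hk : k < n) :
    dsc V k (P k) = Ef V P k + gf V P k := by
  have hp := h.plt k hk
  have hv := h.vp k hk
  unfold Ef gf dsc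
  rcases Nat.eq_zero_or_pos (P k) with h0 | h0
  · simp [h0]
  · obtain ⟨q, hq⟩ : ∃ q, P k = q + 1 := ⟨P k - 1, by omega⟩
    rw [hq] at hv hp ⊢
    rw [Finset.sum_range_succ, Finset.sum_range_succ]
    have : ∑ j ∈ Finset.range q, (if k < V j ∧ V (j + 1) ≤ k then 1 else 0) =
        ∑ j ∈ Finset.range q, (if k < V j ∧ V (j + 1) < k then 1 else 0) := by
      apply Finset.sum_congr rfl
      intro j hj
      rw [Finset.mem_range] at hj
      have hne : V (j + 1) ≠ k := by
        rw [Ne, h.v_eq (by omega) hk]; omega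
      have : V (j + 1) ≤ k ↔ V (j + 1) < k := by omega
      simp only [this]
    rw [this, hv]
    simp

theorem AE (h : IsP n V P) {k : ℕ} (hk : k < n) :
    Af V P k + (if k < V 0 then 1 else 0) = Ef V P k + gf V P k := by
  rw [← dsc_E h hk, Af, asc_dsc, h.vp k hk]; simp

theorem tri (h : IsP n V P) {k : ℕ} (hk : k < n) :
    lf V P k + gf V P k + (if k = V 0 then 1 else 0) = 1 := by
  unfold lf gf
  have hp := h.plt k hk
  have h0 : V 0 = k ↔ 0 = P k := h.v_eq (by omega) hk
  have h1 : V (P k - 1) = k ↔ P k - 1 = P k := h.v_eq (by omega) hk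
  split_ifs <;> omega

theorem asc_level (h : IsP n V P) {k : ℕ} (hk : k + 1 < n) (Q : ℕ) (hQ : Q < n) :
    asc V (k + 1) Q + (if P (k + 1) ≤ Q then lf V P (k + 1) else 0) =
    asc V k Q + (if P (k + 1) + 1 ≤ Q ∧ k + 1 < V (P (k + 1) + 1) then 1 else 0) := by
  induction Q with
  | zero =>
    unfold lf
    simp only [asc_zero]
    split_ifs <;> omega
  | succ Q ih =>
    have ih := ih (by omega)
    rw [asc_succ, asc_succ]
    have e1 := h.v_eq (p := Q) (k := k + 1) (by omega) hk
    have e2 := h.v_eq (p := Q + 1) (k := k + 1) (by omega) hk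
    rcases Nat.lt_trichotomy (Q + 1) (P (k + 1)) with c | c | c
    · have c1 : ¬ P (k + 1) ≤ Q := by omega
      have c2 : ¬ P (k + 1) ≤ Q + 1 := by omega
      simp only [c1, c2, if_false] at ih ⊢
      split_ifs at ih ⊢ <;> omega
    · have c1 : ¬ P (k + 1) ≤ Q := by omega
      have c2 : P (k + 1) ≤ Q + 1 := by omega
      have hl : lf V P (k + 1) = if V Q < k + 1 then 1 else 0 := by
        unfold lf; rw [← c]; simp
      rw [hl]
      simp only [c1, c2, if_false, if_true] at ih ⊢
      split_ifs at ih ⊢ <;> omega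
    · have c1 : P (k + 1) ≤ Q := by omega
      have c2 : P (k + 1) ≤ Q + 1 := by omega
      simp only [c1, c2, if_true] at ih ⊢
      rcases Nat.lt_or_ge (P (k + 1)) Q with d | d
      · split_ifs at ih ⊢ <;> omega
      · obtain rfl : Q = P (k + 1) := by omega
        split_ifs at ih ⊢ <;> omega

/-- crossings between consecutive letters -/
theorem asc_cross (h : IsP n V P) (hB : Bax n V) {k : ℕ} (hk : k + 1 < n) :
    asc V k (P (k + 1)) + uf P k = asc V k (P k) + 1 := by
  have hp := h.plt k (by omega)
  have hp1 := h.plt (k + 1) hk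
  have hv := h.vp k (by omega)
  have hv1 := h.vp (k + 1) hk
  unfold uf
  split_ifs with hlt
  · have key : ∀ Q, P k ≤ Q → Q ≤ P (k + 1) →
        asc V k Q = asc V k (P k) + if k < V Q then 1 else 0 := by
      intro Q hQ
      induction Q, hQ using Nat.le_induction with
      | base => intro _; rw [hv]; simp
      | succ Q hQ ih =>
        intro hQ2
        have ih := ih (by omega)
        rw [asc_succ]
        have e1 := h.v_eq (p := Q) (k := k) (by omega) (by omega)
        have e2 := h.v_eq (p := Q + 1) (k := k + 1) (by omega) hk
        have e3 := h.v_eq (p := Q) (k := k + 1) (by omega) hk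
        have e4 := h.v_eq (p := Q + 1) (k := k) (by omega) (by omega)
        have hb : ¬ (k < V Q ∧ V (Q + 1) ≤ k) := by
          rintro ⟨x1, x2⟩
          apply hB.2 (P k) Q (P (k + 1)) <;> omega
        split_ifs at ih ⊢ <;> omega
    have := key (P (k + 1)) (by omega) (le_refl _)
    rw [hv1] at this
    simp at this
    omega
  · have hne : P k ≠ P (k + 1) := fun e => by have := h.inj (by omega) hk e; omega
    have key : ∀ Q, P (k + 1) ≤ Q → Q ≤ P k → asc V k Q = asc V k (P (k + 1)) := by
      intro Q hQ
      induction Q, hQ using Nat.le_induction with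
      | base => intro _; rfl
      | succ Q hQ ih =>
        intro hQ2
        have ih := ih (by omega)
        rw [asc_succ]
        have e1 := h.v_eq (p := Q) (k := k) (by omega) (by omega)
        have e2 := h.v_eq (p := Q + 1) (k := k + 1) (by omega) hk
        have e3 := h.v_eq (p := Q) (k := k + 1) (by omega) hk
        have e4 := h.v_eq (p := Q + 1) (k := k) (by omega) (by omega)
        have hb : ¬ (V Q ≤ k ∧ k < V (Q + 1)) := by
          rintro ⟨x1, x2⟩
          apply hB.1 (P (k + 1)) Q (P k) <;> omega
        split_ifs at ih ⊢ <;> omega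
    have := key (P k) (by omega) (le_refl _)
    omega

theorem uf_le (P : ℕ → ℕ) (k : ℕ) : uf P k ≤ 1 := by unfold uf; split_ifs <;> omega
theorem lf_le (V P : ℕ → ℕ) (k : ℕ) : lf V P k ≤ 1 := by unfold lf; split_ifs <;> omega
theorem gf_le (V P : ℕ → ℕ) (k : ℕ) : gf V P k ≤ 1 := by unfold gf; split_ifs <;> omega
theorem sf_le (n : ℕ) (V P : ℕ → ℕ) (k : ℕ) : sf n V P k ≤ 1 := by unfold sf; split_ifs <;> omega

theorem recA (h : IsP n V P) (hB : Bax n V) {k : ℕ} (hk : k + 1 < n) :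
    Af V P (k + 1) + lf V P (k + 1) = Af V P k + 1 - uf P k := by
  have h1 := asc_level h hk (P (k + 1)) (h.plt _ hk)
  have h2 := asc_cross h hB hk
  unfold Af
  simp at h1
  omega

theorem recE (h : IsP n V P) (hB : Bax n V) {k : ℕ} (hk : k + 1 < n) :
    Ef V P (k + 1) + (1 - gf V P k) = Ef V P k + 1 - uf P k := by
  have h1 := recA h hB hk
  have h2 := AE h hk
  have h3 := AE h (k := k) (by omega)
  have h4 := tri h hk
  have h5 := tri h (k := k) (by omega)
  have := uf_le P k
  split_ifs at * <;> omega

theorem Af_zero (h : IsP n V P) (hn : 0 < n) : Af V P 0 = 0 := by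
  unfold Af asc
  apply Finset.sum_eq_zero
  intro j hj
  rw [Finset.mem_range] at hj
  have hp := h.plt 0 hn
  have e1 := h.v_eq (p := j) (k := 0) (by omega) (by omega)
  rw [if_neg]; omega

theorem Ef_zero (V P : ℕ → ℕ) : Ef V P 0 = 0 := by
  simp [Ef]

theorem Af_last (h : IsP n V P) (hn : 0 < n) : Af V P (n - 1) = 0 := by
  unfold Af asc
  apply Finset.sum_eq_zero
  intro j hj
  rw [Finset.mem_range] at hj
  have hp := h.plt (n - 1) (by omega)
  have e1 := h.vlt (j + 1) (by omega)
  rw [if_neg]; omega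

theorem Ef_last (h : IsP n V P) (hn : 0 < n) : Ef V P (n - 1) = 0 := by
  unfold Ef
  apply Finset.sum_eq_zero
  intro j hj
  rw [Finset.mem_range] at hj
  have hp := h.plt (n - 1) (by omega)
  have e1 := h.vlt j (by omega)
  rw [if_neg]; omega

/-- if the letter is first, then `Ef = gf = 0`. -/
theorem first_zero (h : IsP n V P) (hn : 0 < n) : Ef V P (V 0) = 0 ∧ gf V P (V 0) = 0 := by
  have := h.pv 0 hn
  simp [Ef, gf, this]

theorem asc_mono (V : ℕ → ℕ) (c : ℕ) {Q Q' : ℕ} (hQ : Q ≤ Q') : asc V c Q ≤ asc V c Q' := by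
  unfold asc
  exact Finset.sum_le_sum_of_subset (Finset.range_mono hQ)

theorem asc_lt (V : ℕ → ℕ) (c : ℕ) {Q Q' : ℕ} (hQ : Q ≤ Q') (h1 : V Q ≤ c) :
    asc V c Q + (if c < V Q' then 1 else 0) ≤ asc V c Q' := by
  induction Q', hQ using Nat.le_induction with
  | base => rw [if_neg (by omega)]; omega
  | succ Q' hQ ih =>
    rw [asc_succ]
    split_ifs at ih ⊢ <;> omega

theorem bef_iff (h : IsP n V P) {k i : ℕ} (hk : k + 1 < n) (hi : i ≤ k) :
    P i < P (k + 1) ↔ asc V k (P i) < asc V k (P (k + 1)) := by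
  constructor
  · intro hlt
    have := asc_lt V k (Q := P i) (Q' := P (k + 1)) (by omega) (by rw [h.vp i (by omega)]; exact hi)
    rw [h.vp _ hk] at this
    simp at this
    omega
  · intro hlt
    by_contra hc
    have := asc_mono V k (Q := P (k + 1)) (Q' := P i) (by omega)
    omega

theorem inj_key {V' P' : ℕ → ℕ} (h : IsP n V P) (h' : IsP n V' P') (hB : Bax n V) (hB' : Bax n V')
    (hu : ∀ k, k + 1 < n → uf P k = uf P' k)
    (hl : ∀ k, k < n → lf V P k = lf V' P' k)
    (hs : ∀ k, k < n → sf n V P k = sf n V' P' k) (k : ℕ) (hk : k < n) :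
    (∀ i, i ≤ k → asc V k (P i) = asc V' k (P' i)) ∧
    (∀ i j, i ≤ k → j ≤ k → (P i < P j ↔ P' i < P' j)) := by
  induction k with
  | zero =>
    constructor
    · intro i hi
      obtain rfl : i = 0 := by omega
      have := Af_zero h (by omega)
      have := Af_zero h' (by omega)
      unfold Af at *
      omega
    · intro i j hi hj
      obtain rfl : i = 0 := by omega
      obtain rfl : j = 0 := by omega
      simp
  | succ k ih =>
    obtain ⟨ih1, ih2⟩ := ih (by omega)
    have c1 := asc_cross h hB hk
    have c2 := asc_cross h' hB' hk
    have c3 := hu k hk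
    have c4 := ih1 k (le_refl _)
    have c5 := hl (k + 1) hk
    have c6 := hs (k + 1) hk
    have key : ∀ i, i ≤ k → (P i < P (k + 1) ↔ P' i < P' (k + 1)) := by
      intro i hi
      rw [bef_iff h hk hi, bef_iff h' hk hi, ih1 i hi]
      omega
    constructor
    · intro i hi
      have a1 := asc_level h hk (P i) (h.plt i (by omega))
      have a2 := asc_level h' hk (P' i) (h'.plt i (by omega))
      rcases Nat.lt_or_ge i (k + 1) with hi' | hi'
      · have k1 := key i (by omega)
        have k2 := ih1 i (by omega)
        have n1 : P i ≠ P (k + 1) := fun e => by have := h.inj (by omega) hk e; omega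
        have n2 : P' i ≠ P' (k + 1) := fun e => by have := h'.inj (by omega) hk e; omega
        have p1 := h.plt i (by omega)
        have p2 := h'.plt i (by omega)
        by_cases hc : P i < P (k + 1)
        · have hc' := k1.1 hc
          rw [if_neg (by omega), if_neg (by omega)] at a1 a2
          omega
        · have hc' : ¬ P' i < P' (k + 1) := fun x => hc (k1.2 x)
          have v1 := h.v_eq (p := P (k + 1) + 1) (k := k + 1) (by omega) hk
          have v2 := h'.v_eq (p := P' (k + 1) + 1) (k := k + 1) (by omega) hk
          unfold sf at c6
          rw [if_pos (by omega)] at a1 a2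
          split_ifs at * <;> omega
      · obtain rfl : i = k + 1 := by omega
        simp at a1 a2
        omega
    · intro i j hi hj
      rcases Nat.lt_or_ge i (k + 1) with hi' | hi'
      · rcases Nat.lt_or_ge j (k + 1) with hj' | hj'
        · exact ih2 i j (by omega) (by omega)
        · obtain rfl : j = k + 1 := by omega
          exact key i (by omega)
      · obtain rfl : i = k + 1 := by omega
        rcases Nat.lt_or_ge j (k + 1) with hj' | hj'
        · have n1 : P j ≠ P (k + 1) := fun e => by have := h.inj (by omega) hk e; omega
          have n2 : P' j ≠ P' (k + 1) := fun e => by have := h'.inj (by omega) hk e; omega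
          have := key j (by omega)
          omega
        · obtain rfl : j = k + 1 := by omega
          simp

theorem P_card (h : IsP n V P) {i : ℕ} (hi : i < n) :
    ((Finset.range n).filter (fun j => P j < P i)).card = P i := by
  conv_rhs => rw [← Finset.card_range (P i)]
  have hp := h.plt i hi
  refine Finset.card_nbij' P V ?_ ?_ ?_ ?_
  · intro j hj
    simp at hj ⊢
    exact hj.2
  · intro p hp
    simp at hp ⊢
    exact ⟨h.vlt p (by omega), by rw [h.pv p (by omega)]; exact hp⟩
  · intro j hj
    simp at hj
    exact h.vp j hj.1
  · intro p hp
    simp at hp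
    exact h.pv p (by omega)

theorem inj_P {V' P' : ℕ → ℕ} (h : IsP n V P) (h' : IsP n V' P') (hB : Bax n V) (hB' : Bax n V')
    (hu : ∀ k, k + 1 < n → uf P k = uf P' k)
    (hl : ∀ k, k < n → lf V P k = lf V' P' k)
    (hs : ∀ k, k < n → sf n V P k = sf n V' P' k) (i : ℕ) (hi : i < n) : P i = P' i := by
  rw [← P_card h hi, ← P_card h' hi]
  congr 1
  apply Finset.filter_congr
  intro j hj
  rw [Finset.mem_range] at hj
  exact (inj_key h h' hB hB' hu hl hs (n - 1) (by omega)).2 j i (by omega) (by omega)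

/-- reversal -/
theorem IsP.rev (h : IsP n V P) : IsP n (fun j => V (n - 1 - j)) (fun k => n - 1 - P k) := by
  constructor
  · intro p hp; exact h.vlt _ (by omega)
  · intro k hk; have := h.plt k hk; omega
  · intro p hp
    rw [h.pv _ (by omega)]; omega
  · intro k hk
    have := h.plt k hk
    rw [show n - 1 - (n - 1 - P k) = P k by omega, h.vp k hk]

theorem Bax.rev (hB : Bax n V) : Bax n (fun j => V (n - 1 - j)) := by
  constructor
  · intro i j l h1 h2 h3 h4 h5 h6
    apply hB.2 (n - 1 - l) (n - 1 - (j + 1)) (n - 1 - i) (by omega) (by omega) (by omega)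
    · rw [show n - 1 - (j + 1) + 1 = n - 1 - j by omega]; exact h4
    · exact h5
    · exact h6
  · intro i j l h1 h2 h3 h4 h5 h6
    apply hB.1 (n - 1 - l) (n - 1 - (j + 1)) (n - 1 - i) (by omega) (by omega) (by omega)
    · exact h4
    · exact h5
    · rw [show n - 1 - (j + 1) + 1 = n - 1 - j by omega]; exact h6

theorem lf_rev (h : IsP n V P) {k : ℕ} (hk : k < n) :
    lf (fun j => V (n - 1 - j)) (fun k => n - 1 - P k) k = sf n V P k := by
  have := h.plt k hk
  unfold lf sf
  by_cases hc : P k + 1 < n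
  · simp only [show n - 1 - (n - 1 - P k - 1) = P k + 1 by omega]
    have : 0 < n - 1 - P k := by omega
    simp [this, hc]
  · have : ¬ 0 < n - 1 - P k := by omega
    simp [this, hc]

theorem uf_rev (h : IsP n V P) {k : ℕ} (hk : k + 1 < n) :
    uf (fun k => n - 1 - P k) k = 1 - uf P k := by
  have h1 := h.plt k (by omega)
  have h2 := h.plt (k + 1) hk
  have hne : P k ≠ P (k + 1) := fun e => by have := h.inj (by omega) hk e; omega
  unfold uf
  beta_reduce
  split_ifs <;> omega

end
section
variable {n : ℕ}

theorem ivt (Q : ℕ → Prop) (x y : ℕ) (hxy : x ≤ y) (hx : Q x) (hy : ¬ Q y) :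
    ∃ k, x ≤ k ∧ k < y ∧ Q k ∧ ¬ Q (k + 1) := by
  induction y, hxy using Nat.le_induction with
  | base => exact absurd hx hy
  | succ y hxy ih =>
    by_cases hq : Q y
    · exact ⟨y, hxy, by omega, hq, hy⟩
    · obtain ⟨k, h1, h2, h3, h4⟩ := ih hq
      exact ⟨k, h1, by omega, h3, h4⟩

theorem bef_bax {V P a b w l s : ℕ → ℕ} (h : IsP n V P) (hd : Dat n a b w l s)
    (hb : ∀ i j, i < n → j < n → (Bef a w l s i j ↔ P i < P j)) : Bax n V := by
  constructor
  · intro i j m hij hjm hm h1 h2 h3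
    have vj := h.vlt j (by omega)
    have vj1 := h.vlt (j + 1) (by omega)
    have vi := h.vlt i (by omega)
    have vm := h.vlt m (by omega)
    have pj := h.pv j (by omega)
    have pj1 := h.pv (j + 1) (by omega)
    obtain ⟨k, k1, k2, k3, k4⟩ := ivt (fun k => j < P k) (V m) (V i) (by omega)
      (by simp only [h.pv m hm]; omega) (by simp only [h.pv i (by omega)]; omega)
    have e1 := h.v_eq (p := j) (k := k + 1) (by omega) (by omega)
    have e2 := h.v_eq (p := j + 1) (k := k) (by omega) (by omega)
    refine bar2 hd (k := k) (x := V j) (y := V (j + 1)) (by omega) (by omega) (by omega) vj1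
      ?_ ?_ ?_ <;> rw [hb _ _ (by omega) (by omega)] <;> omega
  · intro i j m hij hjm hm h1 h2 h3
    have vj := h.vlt j (by omega)
    have vj1 := h.vlt (j + 1) (by omega)
    have vi := h.vlt i (by omega)
    have vm := h.vlt m (by omega)
    have pj := h.pv j (by omega)
    have pj1 := h.pv (j + 1) (by omega)
    obtain ⟨k, k1, k2, k3, k4⟩ := ivt (fun k => P k ≤ j) (V i) (V m) (by omega)
      (by simp only [h.pv i (by omega)]; omega) (by simp only [h.pv m (by omega)]; omega)
    have e1 := h.v_eq (p := j) (k := k) (by omega) (by omega)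
    have e2 := h.v_eq (p := j + 1) (k := k + 1) (by omega) (by omega)
    refine bar1 hd (k := k) (x := V (j + 1)) (y := V j) (by omega) (by omega) (by omega) vj
      ?_ ?_ ?_ <;> rw [hb _ _ (by omega) (by omega)] <;> omega

theorem bef_data {V P a b w l s : ℕ → ℕ} (h : IsP n V P) (hd : Dat n a b w l s)
    (l0 : l 0 = 0) (s0 : s 0 = 0)
    (hb : ∀ i j, i < n → j < n → (Bef a w l s i j ↔ P i < P j)) :
    (∀ k, k + 1 < n → uf P k = w k) ∧ (∀ k, k < n → lf V P k = l k) ∧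
    (∀ k, k < n → sf n V P k = s k) := by
  refine ⟨?_, ?_, ?_⟩
  · intro k hk
    have h1 := Bef_w hd k
    rw [hb _ _ hk (by omega)] at h1
    have h2 := hd.w1 k
    have hne : P k ≠ P (k + 1) := fun e => by have := h.inj (by omega) hk e; omega
    unfold uf
    split_ifs <;> omega
  · intro k hk
    have h1 := hd.l1 k
    have hp := h.plt k hk
    unfold lf
    split_ifs with hc
    · have pp := h.pv (P k - 1) (by omega)
      refine (dat_l hd hk (p := V (P k - 1)) (h.vlt _ (by omega)) ?_ ?_ hc.2).symm
      · rw [hb _ _ (by omega) hk]; omega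
      · intro q hq
        rw [hb _ _ (by omega) hq, hb _ _ hq hk]; omega
    · by_contra hl
      have hk0 : 0 < k := by
        rcases Nat.eq_zero_or_pos k with rfl | h0
        · omega
        · exact h0
      obtain ⟨i, hi, h2, h3⟩ := dat_l' hd hk hk0 (by omega)
      rw [hb _ _ (by omega) hk] at h2
      have vl := h.vlt (P k - 1) (by omega)
      have h4 := h3 (V (P k - 1))
      have pp := h.pv (P k - 1) (by omega)
      rw [hb _ _ (by omega) (by omega), hb _ _ (by omega) (by omega)] at h4
      have e1 := h.v_eq (p := P k - 1) (k := k) (by omega) hk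
      have e2 := h.v_eq (p := P k - 1) (k := i) (by omega) (by omega)
      exact h4 (by omega) (by omega) (by omega)
  · intro k hk
    have h1 := hd.s1 k
    have hp := h.plt k hk
    unfold sf
    split_ifs with hc
    · have pp := h.pv (P k + 1) (by omega)
      refine (dat_s hd hk (p := V (P k + 1)) (h.vlt _ (by omega)) ?_ ?_ hc.2).symm
      · rw [hb _ _ hk (by omega)]; omega
      · intro q hq
        rw [hb _ _ hk hq, hb _ _ hq (by omega)]; omega
    · by_contra hl
      have hk0 : 0 < k := by
        rcases Nat.eq_zero_or_pos k with rfl | h0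
        · omega
        · exact h0
      obtain ⟨i, hi, h2, h3⟩ := dat_s' hd hk hk0 (by omega)
      rw [hb _ _ hk (by omega)] at h2
      have pin := h.plt i (by omega)
      have vl := h.vlt (P k + 1) (by omega)
      have h4 := h3 (V (P k + 1))
      have pp := h.pv (P k + 1) (by omega)
      rw [hb _ _ (by omega) (by omega), hb _ _ (by omega) (by omega)] at h4
      have e1 := h.v_eq (p := P k + 1) (k := k) (by omega) hk
      have e2 := h.v_eq (p := P k + 1) (k := i) (by omega) (by omega)
      exact h4 (by omega) (by omega) (by omega)

def pV (σ : Equiv.Perm (Fin n)) (p : ℕ) : ℕ := if h : p < n then (σ ⟨p, h⟩ : ℕ) else 0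
def pP (σ : Equiv.Perm (Fin n)) (p : ℕ) : ℕ := pV σ.symm p

theorem pV_fin (σ : Equiv.Perm (Fin n)) (i : Fin n) : pV σ i = σ i := by
  simp [pV]

theorem pV_lt (σ : Equiv.Perm (Fin n)) (p : ℕ) (hp : p < n) : pV σ p < n := by
  simp [pV, hp]

theorem pV_symm (σ : Equiv.Perm (Fin n)) (p : ℕ) (hp : p < n) : pV σ.symm (pV σ p) = p := by
  have := pV_fin σ ⟨p, hp⟩
  simp only at this
  rw [this, pV_fin]; simp

theorem isP (σ : Equiv.Perm (Fin n)) : IsP n (pV σ) (pP σ) where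
  vlt := pV_lt σ
  plt := pV_lt σ.symm
  pv := pV_symm σ
  vp := pV_symm σ.symm

theorem pP_ext (σ τ : Equiv.Perm (Fin n)) (h : ∀ k, k < n → pP σ k = pP τ k) : σ = τ := by
  have : σ.symm = τ.symm := by
    ext i
    have := h i i.2
    unfold pP at this
    rwa [pV_fin, pV_fin] at this
  rw [← σ.symm_symm, this, τ.symm_symm]

theorem valAt_pV (σ : Equiv.Perm (Fin n)) (p : ℕ) (hp : p < n) :
    valAt ⇑σ (p + 1) = pV σ p + 1 := by
  have : 1 ≤ p + 1 ∧ p + 1 ≤ n := by omega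
  simp [valAt, pV, hp]

theorem bax_iff (σ : Equiv.Perm (Fin n)) : IsBaxter ⇑σ ↔ Bax n (pV σ) := by
  unfold IsBaxter Contains3142 Contains2413 Bax pv
  apply and_congr
  · constructor
    · intro h i j l h1 h2 h3 h4 h5 h6
      apply h
      refine ⟨⟨i, by omega⟩, ⟨j, by omega⟩, ⟨l, h3⟩, ?_⟩
      simp only
      rw [valAt_pV _ _ (by omega), valAt_pV _ _ (by omega), valAt_pV _ _ (by omega),
        valAt_pV _ _ (by omega)]
      omega
    · rintro h ⟨i, j, l, h1, h2, h3⟩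
      rw [valAt_pV _ _ (by omega), valAt_pV _ _ (by omega), valAt_pV _ _ (by omega),
        valAt_pV _ _ (by omega)] at h3
      apply h i j l <;> omega
  · constructor
    · intro h i j l h1 h2 h3 h4 h5 h6
      apply h
      refine ⟨⟨i, by omega⟩, ⟨j, by omega⟩, ⟨l, h3⟩, ?_⟩
      simp only
      rw [valAt_pV _ _ (by omega), valAt_pV _ _ (by omega), valAt_pV _ _ (by omega),
        valAt_pV _ _ (by omega)]
      omega
    · rintro h ⟨i, j, l, h1, h2, h3⟩
      rw [valAt_pV _ _ (by omega), valAt_pV _ _ (by omega), valAt_pV _ _ (by omega),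
        valAt_pV _ _ (by omega)] at h3
      apply h i j l <;> omega

open Classical in
theorem surj {a b w l s : ℕ → ℕ} (hd : Dat n a b w l s) (l0 : l 0 = 0) (s0 : s 0 = 0) :
    ∃ σ : Equiv.Perm (Fin n), IsBaxter ⇑σ ∧
    (∀ k, k + 1 < n → uf (pP σ) k = w k) ∧ (∀ k, k < n → lf (pV σ) (pP σ) k = l k) ∧
    (∀ k, k < n → sf n (pV σ) (pP σ) k = s k) := by
  let pos : ℕ → ℕ := fun i => ((Finset.range n).filter (fun j => Bef a w l s j i)).card
  have mono : ∀ i j, i < n → j < n → Bef a w l s i j → pos i < pos j := by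
    intro i j hi hj hb
    apply Finset.card_lt_card
    rw [Finset.ssubset_iff_of_subset]
    · exact ⟨i, by simp [hi, hb], by simp [Bef_irrefl]⟩
    · intro x hx
      simp only [Finset.mem_filter, Finset.mem_range] at hx ⊢
      exact ⟨hx.1, Bef_tr hd hx.1 hi hj hx.2 hb⟩
  have plt : ∀ i, i < n → pos i < n := by
    intro i hi
    calc pos i < (Finset.range n).card := by
          apply Finset.card_lt_card
          rw [Finset.ssubset_iff_of_subset (Finset.filter_subset _ _)]
          exact ⟨i, by simp [hi], by simp [Bef_irrefl]⟩
      _ = n := Finset.card_range n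
  have hiff : ∀ i j, i < n → j < n → (Bef a w l s i j ↔ pos i < pos j) := by
    intro i j hi hj
    refine ⟨mono i j hi hj, fun hlt => ?_⟩
    have hne : i ≠ j := by rintro rfl; omega
    rcases Bef_total (a := a) (w := w) (l := l) (s := s) hne with hb | hb
    · exact hb
    · have := mono j i hj hi hb; omega
  let f : Fin n → Fin n := fun i => ⟨pos i, plt i i.2⟩
  have finj : Function.Injective f := by
    intro i j hij
    by_contra hne
    have he : pos i = pos j := congrArg Fin.val hij
    have hne' : (i : ℕ) ≠ j := fun e => hne (Fin.ext e)
    rcases Bef_total (a := a) (w := w) (l := l) (s := s) hne' with hb | hb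
    · have := mono _ _ i.2 j.2 hb; omega
    · have := mono _ _ j.2 i.2 hb; omega
  let e : Equiv.Perm (Fin n) := Equiv.ofBijective f (Finite.injective_iff_bijective.1 finj)
  have hP : ∀ i, i < n → pP e.symm i = pos i := by
    intro i hi
    unfold pP pV
    simp [hi, e, f]
  have hiff2 : ∀ i j, i < n → j < n → (Bef a w l s i j ↔ pP e.symm i < pP e.symm j) := by
    intro i j hi hj
    rw [hP i hi, hP j hj]; exact hiff i j hi hj
  refine ⟨e.symm, (bax_iff _).2 (bef_bax (isP _) hd hiff2), bef_data (isP _) hd l0 s0 hiff2⟩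

/-! ### statistics -/

theorem card_pairs (p : Fin n × Fin n → Prop) [DecidablePred p] (q : ℕ → ℕ → Prop)
    [∀ i j, Decidable (q i j)] (h : ∀ x, p x ↔ q x.1 x.2) :
    (Finset.univ.filter p).card =
      ∑ k ∈ Finset.range n, ∑ j ∈ Finset.range n, if q k j then 1 else 0 := by
  rw [Finset.card_filter, Fintype.sum_prod_type]
  rw [← Fin.sum_univ_eq_sum_range (fun k => ∑ j ∈ Finset.range n, if q k j then 1 else 0)]
  apply Finset.sum_congr rfl
  intro i _
  rw [← Fin.sum_univ_eq_sum_range (fun j => if q i j then 1 else 0)]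
  apply Finset.sum_congr rfl
  intro j _
  simp only [h]

theorem Af_sum {V P : ℕ → ℕ} (h : IsP n V P) {k : ℕ} (hk : k < n) :
    (∑ j ∈ Finset.range n, if 1 ≤ j ∧ j < P k ∧ V (j - 1) < k ∧ k < V j then 1 else 0) =
      Af V P k := by
  unfold Af asc
  have hp := h.plt k hk
  obtain ⟨m, rfl⟩ : ∃ m, n = m + 1 := ⟨n - 1, by omega⟩
  rw [Finset.sum_range_succ', ← Finset.card_filter, ← Finset.card_filter, if_neg (by omega),
    Nat.add_zero]
  congr 1
  ext j
  simp only [Finset.mem_filter, Finset.mem_range, Nat.add_sub_cancel]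
  constructor
  · rintro ⟨h1, h2⟩
    exact ⟨by omega, by omega⟩
  · rintro ⟨h1, h2⟩
    have e1 := h.v_eq (p := j) (k := k) (by omega) hk
    have e2 := h.v_eq (p := j + 1) (k := k) (by omega) hk
    omega

theorem Ef_sum {V P : ℕ → ℕ} (h : IsP n V P) {k : ℕ} (hk : k < n) :
    (∑ j ∈ Finset.range n, if 1 ≤ j ∧ j < P k ∧ V j < k ∧ k < V (j - 1) then 1 else 0) =
      Ef V P k := by
  unfold Ef
  have hp := h.plt k hk
  obtain ⟨m, rfl⟩ : ∃ m, n = m + 1 := ⟨n - 1, by omega⟩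
  rw [Finset.sum_range_succ', ← Finset.card_filter, ← Finset.card_filter, if_neg (by omega),
    Nat.add_zero]
  congr 1
  ext j
  simp only [Finset.mem_filter, Finset.mem_range, Nat.add_sub_cancel]
  constructor
  · rintro ⟨h1, h2⟩
    exact ⟨by omega, by omega⟩
  · rintro ⟨h1, h2⟩
    have e1 := h.v_eq (p := j) (k := k) (by omega) hk
    have e2 := h.v_eq (p := j + 1) (k := k) (by omega) hk
    omega

def rV (σ : Equiv.Perm (Fin n)) : ℕ → ℕ := fun j => pV σ (n - 1 - j)
def rP (σ : Equiv.Perm (Fin n)) : ℕ → ℕ := fun k => n - 1 - pP σ k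

theorem isPr (σ : Equiv.Perm (Fin n)) : IsP n (rV σ) (rP σ) := (isP σ).rev

theorem pv_symm (σ : Equiv.Perm (Fin n)) (i : Fin n) : pv (σ.symm i) = pP σ i + 1 := by
  unfold pv pP; rw [pV_fin]

theorem stat13_2_eq (σ : Equiv.Perm (Fin n)) :
    stat13_2 σ = ∑ k ∈ Finset.range n, Af (pV σ) (pP σ) k := by
  unfold stat13_2
  rw [card_pairs _ (fun k j => 1 ≤ j ∧ j < pP σ k ∧ pV σ (j - 1) < k ∧ k < pV σ j)]
  · apply Finset.sum_congr rfl
    intro k hk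
    exact Af_sum (isP σ) (Finset.mem_range.1 hk)
  · rintro ⟨k, j⟩
    rw [pv_symm]
    unfold pv
    simp only
    rw [valAt_pV _ _ j.2]
    by_cases hj : 1 ≤ (j : ℕ)
    · rw [show (j : ℕ) + 1 - 1 = (j - 1) + 1 by omega, valAt_pV _ _ (by omega)]; omega
    · omega

theorem stat31_2_eq (σ : Equiv.Perm (Fin n)) :
    stat31_2 σ = ∑ k ∈ Finset.range n, Ef (pV σ) (pP σ) k := by
  unfold stat31_2
  rw [card_pairs _ (fun k j => 1 ≤ j ∧ j < pP σ k ∧ pV σ j < k ∧ k < pV σ (j - 1))]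
  · apply Finset.sum_congr rfl
    intro k hk
    exact Ef_sum (isP σ) (Finset.mem_range.1 hk)
  · rintro ⟨k, j⟩
    rw [pv_symm]
    unfold pv
    simp only
    rw [valAt_pV _ _ j.2]
    by_cases hj : 1 ≤ (j : ℕ)
    · rw [show (j : ℕ) + 1 - 1 = (j - 1) + 1 by omega, valAt_pV _ _ (by omega)]; omega
    · omega

theorem stat2_31_eq (σ : Equiv.Perm (Fin n)) :
    stat2_31 σ = ∑ k ∈ Finset.range n, Af (rV σ) (rP σ) k := by
  unfold stat2_31
  rw [card_pairs _ (fun k j => pP σ k < j ∧ j + 1 < n ∧ pV σ (j + 1) < k ∧ k < pV σ j)]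
  · apply Finset.sum_congr rfl
    intro k hk
    rw [← Af_sum (isPr σ) (Finset.mem_range.1 hk), ← Finset.sum_range_reflect]
    have hp := (isP σ).plt k (Finset.mem_range.1 hk)
    apply Finset.sum_congr rfl
    intro j hj
    rw [Finset.mem_range] at hj
    unfold rV rP
    beta_reduce
    by_cases hc : 1 ≤ j
    · rw [show n - 1 - (j - 1) = n - 1 - j + 1 by omega]
      congr 1
      apply propext; omega
    · rw [if_neg (by omega), if_neg (by omega)]
  · rintro ⟨k, j⟩
    rw [pv_symm]
    unfold pv
    simp only
    rw [valAt_pV _ _ j.2]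
    by_cases hj : (j : ℕ) + 1 < n
    · rw [valAt_pV _ _ hj]; omega
    · omega

theorem stat2_13_eq (σ : Equiv.Perm (Fin n)) :
    stat2_13 σ = ∑ k ∈ Finset.range n, Ef (rV σ) (rP σ) k := by
  unfold stat2_13
  rw [card_pairs _ (fun k j => pP σ k < j ∧ j + 1 < n ∧ pV σ j < k ∧ k < pV σ (j + 1))]
  · apply Finset.sum_congr rfl
    intro k hk
    rw [← Ef_sum (isPr σ) (Finset.mem_range.1 hk), ← Finset.sum_range_reflect]
    have hp := (isP σ).plt k (Finset.mem_range.1 hk)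
    apply Finset.sum_congr rfl
    intro j hj
    rw [Finset.mem_range] at hj
    unfold rV rP
    beta_reduce
    by_cases hc : 1 ≤ j
    · rw [show n - 1 - (j - 1) = n - 1 - j + 1 by omega]
      congr 1
      apply propext; omega
    · rw [if_neg (by omega), if_neg (by omega)]
  · rintro ⟨k, j⟩
    rw [pv_symm]
    unfold pv
    simp only
    rw [valAt_pV _ _ j.2]
    by_cases hj : (j : ℕ) + 1 < n
    · rw [valAt_pV _ _ hj]; omega
    · omega

/-! ### the bijection -/

theorem AL_det {V P V' P' : ℕ → ℕ} (h : IsP n V P) (h' : IsP n V' P')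
    (hA : ∀ k, k < n → Af V P k = Af V' P' k) (hl : ∀ k, k < n → lf V P k = lf V' P' k)
    (k : ℕ) (hk : k < n) : Ef V P k = Ef V' P' k := by
  have v0 := h.vlt 0 (by omega)
  have v0' := h'.vlt 0 (by omega)
  have f1 := first_zero h (by omega)
  have f2 := first_zero h' (by omega)
  have e : V 0 = V' 0 := by
    rcases Nat.lt_trichotomy (V 0) (V' 0) with c | c | c
    · have x1 := AE h' v0'
      have x2 := tri h' v0'
      have x3 := AE h v0'
      have x4 := tri h v0'
      have := hA _ v0'
      have := hl _ v0'
      split_ifs at * <;> omega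
    · exact c
    · have x1 := AE h' v0
      have x2 := tri h' v0
      have x3 := AE h v0
      have x4 := tri h v0
      have := hA _ v0
      have := hl _ v0
      split_ifs at * <;> omega
  have x1 := AE h' hk
  have x2 := tri h' hk
  have x3 := AE h hk
  have x4 := tri h hk
  have := hA _ hk
  have := hl _ hk
  rw [e] at x3 x4
  omega

theorem EG_det {V P V' P' : ℕ → ℕ} (h : IsP n V P) (h' : IsP n V' P')
    (hE : ∀ k, k < n → Ef V P k = Ef V' P' k) (hg : ∀ k, k < n → gf V P k = gf V' P' k)
    (k : ℕ) (hk : k < n) : lf V P k = lf V' P' k := by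
  have v0 := h.vlt 0 (by omega)
  have v0' := h'.vlt 0 (by omega)
  have f1 := first_zero h (by omega)
  have f2 := first_zero h' (by omega)
  have e : V 0 = V' 0 := by
    rcases Nat.lt_trichotomy (V 0) (V' 0) with c | c | c
    · have x1 := AE h' v0
      have x3 := AE h v0
      have := hE _ v0
      have := hg _ v0
      split_ifs at * <;> omega
    · exact c
    · have x1 := AE h' v0'
      have x3 := AE h v0'
      have := hE _ v0'
      have := hg _ v0'
      split_ifs at * <;> omega
  have x2 := tri h' hk
  have x4 := tri h hk
  have := hg _ hk
  rw [e] at x4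
  omega

theorem recAr (σ : Equiv.Perm (Fin n)) (hB : IsBaxter ⇑σ) {k : ℕ} (hk : k + 1 < n) :
    Af (rV σ) (rP σ) (k + 1) + sf n (pV σ) (pP σ) (k + 1) =
      Af (rV σ) (rP σ) k + uf (pP σ) k := by
  have h1 := recA (isPr σ) ((bax_iff σ).1 hB).rev hk
  have h2 := lf_rev (isP σ) hk
  have h3 := uf_rev (isP σ) hk
  have h4 := uf_le (pP σ) k
  unfold rV rP at *
  omega

theorem exPhi (σ : Equiv.Perm (Fin n)) (hB : IsBaxter ⇑σ) :
    ∃ τ : Equiv.Perm (Fin n), IsBaxter ⇑τ ∧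
      (∀ k, k + 1 < n → uf (pP τ) k = uf (pP σ) k) ∧
      (∀ k, k + 1 < n → lf (pV τ) (pP τ) (k + 1) = 1 - gf (pV σ) (pP σ) k) ∧
      (∀ k, k < n → sf n (pV τ) (pP τ) k = sf n (pV σ) (pP σ) k) := by
  rcases Nat.eq_zero_or_pos n with h0 | hn
  · exact ⟨σ, hB, by omega, by omega, by omega⟩
  have hd : Dat n (Ef (pV σ) (pP σ)) (Af (rV σ) (rP σ)) (uf (pP σ))
      (fun k => if k = 0 then 0 else 1 - gf (pV σ) (pP σ) (k - 1)) (sf n (pV σ) (pP σ)) := by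
    constructor
    · exact uf_le _
    · intro k; beta_reduce; split_ifs <;> omega
    · exact sf_le _ _ _
    · exact Ef_zero _ _
    · exact Af_zero (isPr σ) hn
    · intro k hk
      simpa using recE (isP σ) ((bax_iff σ).1 hB) hk
    · intro k hk; exact recAr σ hB hk
    · exact Ef_last (isP σ) hn
    · exact Af_last (isPr σ) hn
  obtain ⟨τ, h1, h2, h3, h4⟩ := surj hd (by simp) (by simp [sf])
  exact ⟨τ, h1, h2, fun k hk => by rw [h3 _ hk]; simp, h4⟩

theorem phi_A (σ τ : Equiv.Perm (Fin n)) (hσ : IsBaxter ⇑σ) (hτ : IsBaxter ⇑τ)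
    (hu : ∀ k, k + 1 < n → uf (pP τ) k = uf (pP σ) k)
    (hl : ∀ k, k + 1 < n → lf (pV τ) (pP τ) (k + 1) = 1 - gf (pV σ) (pP σ) k)
    (k : ℕ) (hk : k < n) : Af (pV τ) (pP τ) k = Ef (pV σ) (pP σ) k := by
  induction k with
  | zero => rw [Af_zero (isP τ) hk, Ef_zero]
  | succ k ih =>
    have ih := ih (by omega)
    have h1 := recA (isP τ) ((bax_iff τ).1 hτ) hk
    have h2 := recE (isP σ) ((bax_iff σ).1 hσ) hk
    have := hu k hk
    have := hl k hk
    omega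

theorem phi_B (σ τ : Equiv.Perm (Fin n)) (hσ : IsBaxter ⇑σ) (hτ : IsBaxter ⇑τ)
    (hu : ∀ k, k + 1 < n → uf (pP τ) k = uf (pP σ) k)
    (hs : ∀ k, k < n → sf n (pV τ) (pP τ) k = sf n (pV σ) (pP σ) k)
    (k : ℕ) (hk : k < n) : Af (rV τ) (rP τ) k = Af (rV σ) (rP σ) k := by
  induction k with
  | zero => rw [Af_zero (isPr τ) hk, Af_zero (isPr σ) hk]
  | succ k ih =>
    have ih := ih (by omega)
    have h1 := recAr τ hτ hk
    have h2 := recAr σ hσ hk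
    have := hu k hk
    have := hs (k + 1) hk
    omega

theorem gf_top (σ : Equiv.Perm (Fin n)) {k : ℕ} (hk : k < n) (hk' : ¬ k + 1 < n) :
    gf (pV σ) (pP σ) k = 0 := by
  have h1 := (isP σ).plt k hk
  have h2 := (isP σ).vlt (pP σ k - 1) (by omega)
  unfold gf
  rw [if_neg (by omega)]

/-! ### complement -/

def cmp (σ : Equiv.Perm (Fin n)) : Equiv.Perm (Fin n) := σ.trans Fin.revPerm

theorem cmp_cmp (σ : Equiv.Perm (Fin n)) : cmp (cmp σ) = σ := by
  ext i; simp [cmp]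

theorem pV_cmp (σ : Equiv.Perm (Fin n)) (p : ℕ) (hp : p < n) :
    pV (cmp σ) p + pV σ p + 1 = n := by
  have := (σ ⟨p, hp⟩).2
  simp [pV, hp, cmp, Fin.val_rev]
  omega

theorem pP_cmp (σ : Equiv.Perm (Fin n)) (k : ℕ) (hk : k < n) :
    pP (cmp σ) k = pP σ (n - 1 - k) := by
  have hk' : n - 1 - k < n := by omega
  unfold pP pV
  rw [dif_pos hk, dif_pos hk']
  congr 1
  simp only [cmp, Equiv.symm_trans_apply]
  congr 1
  ext
  simp [Fin.val_rev]
  omega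

theorem cmp_bax (σ : Equiv.Perm (Fin n)) (h : IsBaxter ⇑σ) : IsBaxter ⇑(cmp σ) := by
  rw [bax_iff] at h ⊢
  constructor
  · intro i j l h1 h2 h3 h4 h5 h6
    have := pV_cmp σ i (by omega)
    have := pV_cmp σ j (by omega)
    have := pV_cmp σ (j + 1) (by omega)
    have := pV_cmp σ l (by omega)
    apply h.2 i j l <;> omega
  · intro i j l h1 h2 h3 h4 h5 h6
    have := pV_cmp σ i (by omega)
    have := pV_cmp σ j (by omega)
    have := pV_cmp σ (j + 1) (by omega)
    have := pV_cmp σ l (by omega)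
    apply h.1 i j l <;> omega

/-- generic: complementing exchanges `Af` and `Ef` totals. -/
theorem AE_compl {V P V' P' : ℕ → ℕ} (h : IsP n V P) (hV : ∀ p, p < n → V' p + V p + 1 = n)
    (hP : ∀ k, k < n → P' k = P (n - 1 - k)) :
    ∑ k ∈ Finset.range n, Ef V' P' k = ∑ k ∈ Finset.range n, Af V P k := by
  rw [← Finset.sum_range_reflect (fun k => Af V P k)]
  apply Finset.sum_congr rfl
  intro k hk
  rw [Finset.mem_range] at hk
  have hp := h.plt (n - 1 - k) (by omega)
  have hv := h.vp (n - 1 - k) (by omega)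
  unfold Ef Af asc
  rw [hP k hk]
  apply Finset.sum_congr rfl
  intro j hj
  rw [Finset.mem_range] at hj
  have h1 := hV j (by omega)
  have h2 := hV (j + 1) (by omega)
  have e1 := h.v_eq (p := j) (k := n - 1 - k) (by omega) (by omega)
  congr 1
  apply propext
  omega

theorem cmp_13_2 (σ : Equiv.Perm (Fin n)) : stat31_2 (cmp σ) = stat13_2 σ := by
  rw [stat31_2_eq, stat13_2_eq]
  exact AE_compl (isP σ) (pV_cmp σ) (pP_cmp σ)

theorem cmp_2_31 (σ : Equiv.Perm (Fin n)) : stat2_13 (cmp σ) = stat2_31 σ := by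
  rw [stat2_13_eq, stat2_31_eq]
  refine AE_compl (isPr σ) (fun p hp => pV_cmp σ _ (by omega)) (fun k hk => ?_)
  unfold rP
  rw [pP_cmp σ k hk]

theorem cmp_2_13 (σ : Equiv.Perm (Fin n)) : stat2_31 (cmp σ) = stat2_13 σ := by
  rw [← cmp_2_31, cmp_cmp]

end

/-- (\underline{31}2, 2\underline{13}, 2\underline{31}) and
(\underline{31}2, 2\underline{31}, 2\underline{13}) are equidistributed on
Baxter permutations. -/
theorem baxter_trivariate_symmetry (n : ℕ) (R : Type*) [CommSemiring R] (q r s : R) :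
    ∑ σ ∈ Finset.univ.filter (fun σ : Equiv.Perm (Fin n) => IsBaxter ⇑σ),
      q ^ stat31_2 σ * r ^ stat2_13 σ * s ^ stat2_31 σ =
    ∑ σ ∈ Finset.univ.filter (fun σ : Equiv.Perm (Fin n) => IsBaxter ⇑σ),
      q ^ stat31_2 σ * r ^ stat2_31 σ * s ^ stat2_13 σ := by
  classical
  let S := Finset.univ.filter (fun σ : Equiv.Perm (Fin n) => IsBaxter ⇑σ)
  have hS : ∀ σ : Equiv.Perm (Fin n), σ ∈ S ↔ IsBaxter ⇑σ := fun σ => by simp [S]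
  have hex : ∀ σ : Equiv.Perm (Fin n), ∃ τ : Equiv.Perm (Fin n), IsBaxter ⇑σ → (IsBaxter ⇑τ ∧
      (∀ k, k + 1 < n → uf (pP τ) k = uf (pP σ) k) ∧
      (∀ k, k + 1 < n → lf (pV τ) (pP τ) (k + 1) = 1 - gf (pV σ) (pP σ) k) ∧
      (∀ k, k < n → sf n (pV τ) (pP τ) k = sf n (pV σ) (pP σ) k)) := by
    intro σ
    by_cases hB : IsBaxter ⇑σ
    · obtain ⟨τ, hτ⟩ := exPhi σ hB
      exact ⟨τ, fun _ => hτ⟩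
    · exact ⟨σ, fun h => absurd h hB⟩
  choose Φ hΦ using hex
  have maps : Set.MapsTo Φ S S := fun σ hσ => (hS _).2 (hΦ σ ((hS σ).1 hσ)).1
  have inj : Set.InjOn Φ S := by
    intro σ hσ τ hτ e
    replace hσ := (hS σ).1 hσ
    replace hτ := (hS τ).1 hτ
    obtain ⟨a1, a2, a3, a4⟩ := hΦ σ hσ
    obtain ⟨b1, b2, b3, b4⟩ := hΦ τ hτ
    have E1 := phi_A σ (Φ σ) hσ a1 a2 a3
    have E2 := phi_A τ (Φ τ) hτ b1 b2 b3
    rw [e] at a2 a3 a4 E1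
    have hg : ∀ k, k < n → gf (pV σ) (pP σ) k = gf (pV τ) (pP τ) k := by
      intro k hk
      by_cases hk1 : k + 1 < n
      · have x1 := a3 k hk1
        have x2 := b3 k hk1
        have x3 := gf_le (pV σ) (pP σ) k
        have x4 := gf_le (pV τ) (pP τ) k
        omega
      · rw [gf_top σ hk hk1, gf_top τ hk hk1]
    have hl := EG_det (isP σ) (isP τ) (fun k hk => by rw [← E1 k hk, ← E2 k hk]) hg
    apply pP_ext
    exact inj_P (isP σ) (isP τ) ((bax_iff σ).1 hσ) ((bax_iff τ).1 hτ)
      (fun k hk => by rw [← a2 k hk, ← b2 k hk]) hl (fun k hk => by rw [← a4 k hk, ← b4 k hk])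
  have surjS : Set.SurjOn Φ S S := Finset.surjOn_of_injOn_of_card_le Φ maps inj le_rfl
  have step1 : ∑ σ ∈ S, q ^ stat31_2 σ * r ^ stat2_13 σ * s ^ stat2_31 σ =
      ∑ σ ∈ S, q ^ stat13_2 σ * r ^ stat2_13 σ * s ^ stat2_31 σ := by
    refine Finset.sum_nbij Φ maps inj surjS ?_
    intro σ hσ
    replace hσ := (hS σ).1 hσ
    obtain ⟨a1, a2, a3, a4⟩ := hΦ σ hσ
    have E1 := phi_A σ (Φ σ) hσ a1 a2 a3
    have E2 := phi_B σ (Φ σ) hσ a1 a2 a4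
    have E3 := AL_det (isPr (Φ σ)) (isPr σ) E2 (fun k hk => by
      have x1 := lf_rev (isP (Φ σ)) hk
      have x2 := lf_rev (isP σ) hk
      unfold rV rP
      rw [x1, x2, a4 k hk])
    have t1 : stat31_2 σ = stat13_2 (Φ σ) := by
      rw [stat31_2_eq, stat13_2_eq]
      exact Finset.sum_congr rfl (fun k hk => (E1 k (Finset.mem_range.1 hk)).symm)
    have t2 : stat2_31 σ = stat2_31 (Φ σ) := by
      rw [stat2_31_eq, stat2_31_eq]
      exact Finset.sum_congr rfl (fun k hk => (E2 k (Finset.mem_range.1 hk)).symm)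
    have t3 : stat2_13 σ = stat2_13 (Φ σ) := by
      rw [stat2_13_eq, stat2_13_eq]
      exact Finset.sum_congr rfl (fun k hk => (E3 k (Finset.mem_range.1 hk)).symm)
    rw [t1, t2, t3]
  have step2 : ∑ σ ∈ S, q ^ stat13_2 σ * r ^ stat2_13 σ * s ^ stat2_31 σ =
      ∑ σ ∈ S, q ^ stat31_2 σ * r ^ stat2_31 σ * s ^ stat2_13 σ := by
    refine Finset.sum_nbij' cmp cmp ?_ ?_ ?_ ?_ ?_
    · intro σ hσ; exact (hS _).2 (cmp_bax σ ((hS σ).1 hσ))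
    · intro σ hσ; exact (hS _).2 (cmp_bax σ ((hS σ).1 hσ))
    · intro σ _; exact cmp_cmp σ
    · intro σ _; exact cmp_cmp σ
    · intro σ _; rw [cmp_13_2, cmp_2_31, cmp_2_13]
  exact step1.trans step2

end Paper
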